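/- arXiv:1010.1922 — 3 statements merged into one kernel-verified Lean document; each statement's English description precedes it below -/
import Mathlib

section
/- For every finite abstract simplicial complex K on {1,…,m}, the f-polynomial satisfies the identity f_K(t) = Σ_{σ ∈ K} f_{link_K σ}(−1) · (t+1)^{|σ|} in ℤ[t]. (This is the Taylor expansion of f_K at t = −1, whose s-th coefficient equals Σ_{σ∈K, |σ|=s} f_{link_K σ}(−1).) -/
/-!
Writing `X = (X + 1) + (-1)`, the binomial theorem in its subset form gives
`X ^ |ρ| = ∑_{σ ⊆ ρ} (X + 1) ^ |σ| (-1) ^ (|ρ| - |σ|)` for each `ρ ∈ K`. Summing over `ρ ∈ K` and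
exchanging the order of summation, every `σ` that occurs lies in `K` since `K` is closed under
subsets, and the coefficient of `(X + 1) ^ |σ|` is the sum of `(-1) ^ (|ρ| - |σ|)` over the
`ρ ∈ K` containing `σ`. The bijection `τ ↦ τ ∪ σ` from the link of `σ` onto these `ρ` identifies
that sum with `f_{link_K σ}(-1)` (`eval_fPoly_linkK`).
-/

noncomputable section
open scoped Classical
open Polynomial

/-- `K` is a (finite abstract) simplicial complex on the vertex set `Fin m`:
it contains the empty set and is closed under taking subsets. -/
def IsSimplicialComplex {m : ℕ} (K : Finset (Finset (Fin m))) : Prop :=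
  ∅ ∈ K ∧ ∀ σ ∈ K, ∀ τ ⊆ σ, τ ∈ K

/-- The f-polynomial `f_K(t) = Σ_{σ ∈ K} t^|σ|`. -/
def fPoly {m : ℕ} (K : Finset (Finset (Fin m))) : Polynomial ℤ :=
  ∑ σ ∈ K, Polynomial.X ^ σ.card

/-- The link of `σ` in `K`: all `τ` disjoint from `σ` with `τ ∪ σ ∈ K`. -/
def linkK {m : ℕ} (K : Finset (Finset (Fin m))) (σ : Finset (Fin m)) :
    Finset (Finset (Fin m)) :=
  Finset.univ.filter fun τ => τ ∩ σ = ∅ ∧ τ ∪ σ ∈ K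

/-- `σ` is a maximal (under inclusion) simplex of `K`. -/
def IsMaxSimplex {m : ℕ} (K : Finset (Finset (Fin m))) (σ : Finset (Fin m)) : Prop :=
  σ ∈ K ∧ ∀ τ ∈ K, σ ⊆ τ → σ = τ

/-- `σ` is a face simplex of `K`: an intersection of a nonempty collection of
maximal simplices of `K`. -/
def IsFaceSimplex {m : ℕ} (K : Finset (Finset (Fin m))) (σ : Finset (Fin m)) : Prop :=
  ∃ S : Finset (Finset (Fin m)), S.Nonempty ∧ (∀ τ ∈ S, IsMaxSimplex K τ) ∧ σ = S.inf id

/-- The set `F(K)` of face simplices of `K`, as a finset. -/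
def faceSimplices {m : ℕ} (K : Finset (Finset (Fin m))) : Finset (Finset (Fin m)) :=
  Finset.univ.filter fun σ => IsFaceSimplex K σ

/-- The value at `-1` of the f-polynomial of a link, as a signed count of the `ρ ∈ K` containing
`σ`; here `K` may be any family of sets. -/
lemma eval_fPoly_linkK {m : ℕ} (K : Finset (Finset (Fin m))) (σ : Finset (Fin m)) :
    (fPoly (linkK K σ)).eval (-1) =
      ∑ ρ ∈ K.filter (fun ρ => σ ⊆ ρ), (-1 : ℤ) ^ (ρ.card - σ.card) := by
  simp only [fPoly, eval_finsetSum, eval_pow, eval_X]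
  refine Finset.sum_bij' (fun τ _ => τ ∪ σ) (fun ρ _ => ρ \ σ) ?_ ?_ ?_ ?_ ?_
  · intro τ hτ
    simp only [linkK, Finset.mem_filter, Finset.mem_univ, true_and] at hτ ⊢
    exact ⟨hτ.2, Finset.subset_union_right⟩
  · intro ρ hρ
    simp only [linkK, Finset.mem_filter, Finset.mem_univ, true_and] at hρ ⊢
    exact ⟨Finset.sdiff_inter_self _ _, by rw [Finset.sdiff_union_of_subset hρ.2]; exact hρ.1⟩
  · intro τ hτ
    simp only [linkK, Finset.mem_filter, Finset.mem_univ, true_and] at hτ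
    exact Finset.union_sdiff_cancel_right (Finset.disjoint_iff_inter_eq_empty.2 hτ.1)
  · intro ρ hρ
    exact Finset.sdiff_union_of_subset (Finset.mem_filter.1 hρ).2
  · intro τ hτ
    simp only [linkK, Finset.mem_filter, Finset.mem_univ, true_and] at hτ
    rw [Finset.card_union_of_disjoint (Finset.disjoint_iff_inter_eq_empty.2 hτ.1),
      Nat.add_sub_cancel]

/-- Taylor expansion of the f-polynomial at `t = -1`:
`f_K(t) = Σ_{σ ∈ K} f_{link_K σ}(-1) · (t+1)^{|σ|}`. -/
theorem fPoly_taylor_at_neg_one (m : ℕ) (K : Finset (Finset (Fin m)))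
    (hK : IsSimplicialComplex K) :
    fPoly K = ∑ σ ∈ K,
      Polynomial.C ((fPoly (linkK K σ)).eval (-1)) * (Polynomial.X + 1) ^ σ.card := by
  have binom : ∀ ρ : Finset (Fin m), (X : ℤ[X]) ^ ρ.card =
      ∑ σ ∈ ρ.powerset, (X + 1) ^ σ.card * (-1) ^ (ρ.card - σ.card) := fun ρ => by
    rw [Finset.sum_pow_mul_eq_add_pow, add_neg_cancel_right]
  simp only [eval_fPoly_linkK, map_sum, Finset.sum_mul, map_pow, map_neg, map_one]
  rw [fPoly, Finset.sum_congr rfl fun ρ _ => binom ρ]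
  -- The pairs `σ ⊆ ρ ∈ K` are the pairs `σ ⊆ ρ` in `K`, by closure under subsets.
  rw [Finset.sum_comm' (t' := K) (s' := fun σ => K.filter (fun ρ => σ ⊆ ρ))]
  · exact Finset.sum_congr rfl fun σ _ => Finset.sum_congr rfl fun ρ _ => mul_comm _ _
  · intro ρ σ
    simp only [Finset.mem_powerset, Finset.mem_filter]
    exact ⟨fun h => ⟨h, hK.2 ρ h.1 σ h.2⟩, fun h => h.1⟩
end
end

section
/- Let P ⊂ ℝ^n be a convex polytope as in the context. Then for every k ≥ 0, the coefficient of t^k in Σ_F t^{m(F)} is at most the coefficient of t^k in Σ_F (−1)^{dim F}(t+1)^{m(F)} (both sums over all nonempty faces F of P including P itself); moreover these coefficients are equal for k = 0 and k = 1. Equivalently, the coefficientwise inequality F_P(1,t) ≤ F_P(−1,t+1) holds for the two-dimensional face polynomial F_P(α,t) = Σ_F α^{dim F} t^{m(F)}, with equality in the terms t^0 and t^1. -/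
/-!
Nonempty faces of `P` correspond to the active sets `T = σ̃(F)`, and `m(F) = |T|`. The coefficient
of `t ^ k` on the left is therefore the number of active sets of size `k` (`coeff_left`). On the
right it is `∑ F, (-1) ^ dim F * (m(F)).choose k`; choosing a `k`-subset `S` of `σ̃(F)` first, it is
the sum over `|S| = k` of the Euler characteristics `∑ (-1) ^ dim G` of `⋂ i ∈ S, F i`, taken over
its nonempty faces `G`. By the Euler relation it is the number of `k`-sets `S` with
`⋂ i ∈ S, F i ≠ ∅` (`coeff_right`). Every active set is such an `S`, which is the inequality; for
`k ≤ 1` every such `S` is an active set, because `P` lies in no facet and no nonempty facet lies in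
another one.

The Euler relation (`euler_faceOf`) is proved by homogenization. The signed count of the cells cut
out by linear forms on a relatively open convex set is additive under cutting by a hyperplane
(`cellSum_cut`). Consider the closed cone `{ℓ i ≥ 0, i ∈ J}` over a polytope, and a point `v` with
`ℓ i v > 0` for all `i ∈ J`. All the open cones `{ℓ i < 0, i ∈ A}` with `A ⊆ J` contain `-v`, so
each has signed count `(-1) ^ dim`; inclusion-exclusion over `A` then gives the cone the count `0`
when `J ≠ ∅` (`cellSum_of_neg`). By boundedness the part of the cone at height `s = 0` is the
origin, which contributes `1`, so the part `s > 0`, whose cells are the cones over the relatively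
open faces of the polytope, contributes `-1` (`cellSum_slice`).
-/


noncomputable section
open scoped Classical

/-- The convex polytope `P = {x : ⟨a i, x⟩ + b i ≥ 0 for all i}` in `ℝⁿ`. -/
def polytope (n m : ℕ) (a : Fin m → Fin n → ℝ) (b : Fin m → ℝ) : Set (Fin n → ℝ) :=
  {x | ∀ i, 0 ≤ (∑ j, a i j * x j) + b i}

/-- The `i`-th facet `F i = {x ∈ P : ⟨a i, x⟩ + b i = 0}`. -/
def facet (n m : ℕ) (a : Fin m → Fin n → ℝ) (b : Fin m → ℝ) (i : Fin m) : Set (Fin n → ℝ) :=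
  {x | x ∈ polytope n m a b ∧ (∑ j, a i j * x j) + b i = 0}

/-- Dimension of the affine span of a subset of `ℝⁿ`. -/
def sdim {n : ℕ} (F : Set (Fin n → ℝ)) : ℕ :=
  Module.finrank ℝ (affineSpan ℝ F).direction

/-- The face of `P` cut out by the facets indexed by `S` (`S = ∅` gives `P` itself). -/
def faceOf (n m : ℕ) (a : Fin m → Fin n → ℝ) (b : Fin m → ℝ) (S : Finset (Fin m)) :
    Set (Fin n → ℝ) :=
  polytope n m a b ∩ ⋂ i ∈ S, facet n m a b i

/-- The finset of all nonempty faces of `P` (including `P` itself). -/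
def facesFinset (n m : ℕ) (a : Fin m → Fin n → ℝ) (b : Fin m → ℝ) :
    Finset (Set (Fin n → ℝ)) :=
  (Finset.univ.filter fun S : Finset (Fin m) => (faceOf n m a b S).Nonempty).image
    (faceOf n m a b)

/-- `m(F)`: the number of facets of `P` containing `F`. -/
def mOf (n m : ℕ) (a : Fin m → Fin n → ℝ) (b : Fin m → ℝ) (F : Set (Fin n → ℝ)) : ℕ :=
  (Finset.univ.filter fun i => F ⊆ facet n m a b i).card

/-! ### Signed cell counts of linear arrangements -/

/-- For linear forms `ℓ i`, the cell `{x ∈ W ∩ C : ℓ i x = 0 for i ∈ T, ℓ i x > 0 for i ∈ J \ T}`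
contributes `(-1) ^ dim (W ∩ ⋂ i ∈ T, ker (ℓ i))` when it is nonempty; `cellSum ℓ J W C` is the sum
over all `T ⊆ J`. When `C` is open, the exponent is the dimension of the cell, so this is the
compactly supported Euler characteristic of `{x ∈ W ∩ C : ℓ i x ≥ 0 for i ∈ J}`. -/
def cellSum {V ι : Type*} [AddCommGroup V] [Module ℝ V]
    (ℓ : ι → V →ₗ[ℝ] ℝ) (J : Finset ι) (W : Submodule ℝ V) (C : Set V) : ℤ :=
  ∑ T ∈ J.powerset,
    if ∃ x ∈ W, x ∈ C ∧ (∀ i ∈ T, ℓ i x = 0) ∧ ∀ i ∈ J, i ∉ T → 0 < ℓ i x then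
      (-1) ^ Module.finrank ℝ (W ⊓ ⨅ i ∈ T, LinearMap.ker (ℓ i) : Submodule ℝ V)
    else 0

section CellSum

variable {V ι : Type*} [NormedAddCommGroup V] [NormedSpace ℝ V]

lemma cellSum_empty (ℓ : ι → V →ₗ[ℝ] ℝ) (W : Submodule ℝ V) (C : Set V) :
    cellSum ℓ ∅ W C = if ∃ x ∈ W, x ∈ C then (-1) ^ Module.finrank ℝ W else 0 := by
  have e : (W ⊓ ⨅ i ∈ (∅ : Finset ι), LinearMap.ker (ℓ i)) = W := by simp
  rw [cellSum, Finset.powerset_empty, Finset.sum_singleton, e]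
  simp

lemma cellSum_insert (ℓ : ι → V →ₗ[ℝ] ℝ) {J : Finset ι} {j : ι} (hj : j ∉ J)
    (W : Submodule ℝ V) (C : Set V) :
    cellSum ℓ (insert j J) W C =
      cellSum ℓ J W (C ∩ {x | 0 < ℓ j x}) + cellSum ℓ J (W ⊓ LinearMap.ker (ℓ j)) C := by
  unfold cellSum
  rw [Finset.sum_powerset_insert hj]
  congr 1
  · refine Finset.sum_congr rfl fun T hT => ?_
    have hjT : j ∉ T := fun h => hj (Finset.mem_powerset.1 hT h)
    congr 1
    apply propext
    constructor
    · rintro ⟨x, hW, hC, h0, h1⟩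
      exact ⟨x, hW, ⟨hC, h1 j (Finset.mem_insert_self _ _) hjT⟩, h0,
        fun i hi => h1 i (Finset.mem_insert_of_mem hi)⟩
    · rintro ⟨x, hW, ⟨hC, hp⟩, h0, h1⟩
      refine ⟨x, hW, hC, h0, fun i hi hiT => ?_⟩
      rcases Finset.mem_insert.1 hi with rfl | hi
      · exact hp
      · exact h1 i hi hiT
  · refine Finset.sum_congr rfl fun T hT => ?_
    have e : (W ⊓ ⨅ i ∈ insert j T, LinearMap.ker (ℓ i)) =
        (W ⊓ LinearMap.ker (ℓ j)) ⊓ ⨅ i ∈ T, LinearMap.ker (ℓ i) := by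
      rw [Finset.iInf_insert, inf_assoc]
    rw [e]
    congr 1
    apply propext
    constructor
    · rintro ⟨x, hW, hC, h0, h1⟩
      refine ⟨x, ⟨hW, h0 j (Finset.mem_insert_self _ _)⟩, hC,
        fun i hi => h0 i (Finset.mem_insert_of_mem hi), fun i hi hiT => ?_⟩
      refine h1 i (Finset.mem_insert_of_mem hi) fun h => ?_
      rcases Finset.mem_insert.1 h with rfl | h
      · exact hj hi
      · exact hiT h
    · rintro ⟨x, ⟨hW, hk⟩, hC, h0, h1⟩
      refine ⟨x, hW, hC, fun i hi => ?_, fun i hi hiT => ?_⟩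
      · rcases Finset.mem_insert.1 hi with rfl | hi
        · exact hk
        · exact h0 i hi
      · have h2 : i ≠ j ∧ i ∉ T := by simpa [not_or] using hiT
        exact h1 i ((Finset.mem_insert.1 hi).resolve_left h2.1) h2.2

lemma convex_inter_pos (f : V →ₗ[ℝ] ℝ) {C : Set V} (hC : Convex ℝ C) :
    Convex ℝ (C ∩ {x | 0 < f x}) :=
  hC.inter (convex_halfSpace_gt f.isLinear 0)

lemma convex_inter_neg (f : V →ₗ[ℝ] ℝ) {C : Set V} (hC : Convex ℝ C) :
    Convex ℝ (C ∩ {x | f x < 0}) :=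
  hC.inter (convex_halfSpace_lt f.isLinear 0)

variable [FiniteDimensional ℝ V]

lemma finrank_inf_ker_add_one (W : Submodule ℝ V) (f : V →ₗ[ℝ] ℝ) {w : V} (hw : w ∈ W)
    (hfw : f w ≠ 0) :
    Module.finrank ℝ (W ⊓ LinearMap.ker f : Submodule ℝ V) + 1 = Module.finrank ℝ W := by
  have hne : f.domRestrict W ≠ 0 := fun h => hfw (by
    have := LinearMap.congr_fun h ⟨w, hw⟩
    simpa using this)
  rw [← Module.Dual.finrank_ker_add_one_of_ne_zero (f := f.domRestrict W) hne]
  congr 1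
  rw [← Submodule.map_comap_subtype, Submodule.finrank_map_subtype_eq]
  rfl

/-- A relatively open convex set is either missed by a hyperplane, or contained in it, or cut into
two pieces of the same dimension `d` and one of dimension `d - 1`; in each case the signed count
is unchanged. -/
lemma cut_empty (ℓ : ι → V →ₗ[ℝ] ℝ) (f : V →ₗ[ℝ] ℝ) (W : Submodule ℝ V) {C : Set V}
    (hC : IsOpen C) (hconv : Convex ℝ C) :
    cellSum ℓ ∅ W C = cellSum ℓ ∅ W (C ∩ {x | 0 < f x}) + cellSum ℓ ∅ W (C ∩ {x | f x < 0})
      + cellSum ℓ ∅ (W ⊓ LinearMap.ker f) C := by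
  simp only [cellSum_empty]
  by_cases h0 : ∃ x ∈ W ⊓ LinearMap.ker f, x ∈ C
  · have hW : ∃ x ∈ W, x ∈ C := by
      obtain ⟨x, hx, hxC⟩ := h0
      exact ⟨x, hx.1, hxC⟩
    by_cases hle : W ≤ LinearMap.ker f
    · have hz : ∀ x ∈ W, f x = 0 := fun x hx => hle hx
      have h1 : ¬ ∃ x ∈ W, x ∈ C ∩ {x | 0 < f x} := by
        rintro ⟨x, hx, -, h⟩
        simp [hz x hx] at h
      have h2 : ¬ ∃ x ∈ W, x ∈ C ∩ {x | f x < 0} := by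
        rintro ⟨x, hx, -, h⟩
        simp [hz x hx] at h
      rw [if_pos hW, if_neg h1, if_neg h2, if_pos h0, inf_eq_left.2 hle]
      ring
    · obtain ⟨w, hw, hfw⟩ : ∃ w ∈ W, 0 < f w := by
        obtain ⟨w, hw, hfw⟩ := SetLike.not_le_iff_exists.1 hle
        have hfw : f w ≠ 0 := hfw
        rcases lt_or_gt_of_ne hfw with h | h
        · exact ⟨-w, W.neg_mem hw, by simpa using h⟩
        · exact ⟨w, hw, h⟩
      obtain ⟨x, ⟨hxW, hxf⟩, hxC⟩ := h0
      have hxf : f x = 0 := hxf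
      have hcont : Continuous fun t : ℝ => x + t • w := by fun_prop
      have hmem : (fun t : ℝ => x + t • w) ⁻¹' C ∈ nhds (0 : ℝ) :=
        (hC.preimage hcont).mem_nhds (by simpa using hxC)
      obtain ⟨ε, hε, hball⟩ := Metric.mem_nhds_iff.1 hmem
      have h1 : ∃ x ∈ W, x ∈ C ∩ {x | 0 < f x} := by
        refine ⟨x + (ε / 2) • w, W.add_mem hxW (W.smul_mem _ hw), ?_, ?_⟩
        · apply hball
          rw [Metric.mem_ball, Real.dist_eq, sub_zero, abs_of_pos (by linarith)]
          linarith
        · simp only [Set.mem_ofPred_eq, map_add, map_smul, hxf, zero_add, smul_eq_mul]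
          positivity
      have h2 : ∃ x ∈ W, x ∈ C ∩ {x | f x < 0} := by
        refine ⟨x + (-(ε / 2)) • w, W.add_mem hxW (W.smul_mem _ hw), ?_, ?_⟩
        · apply hball
          rw [Metric.mem_ball, Real.dist_eq, sub_zero, abs_neg, abs_of_pos (by linarith)]
          linarith
        · simp only [Set.mem_ofPred_eq, map_add, map_smul, hxf, zero_add, smul_eq_mul]
          have : 0 < ε / 2 * f w := by positivity
          linarith
      rw [if_pos hW, if_pos h1, if_pos h2, if_pos ⟨x, ⟨hxW, hxf⟩, hxC⟩,
        ← finrank_inf_ker_add_one W f hw hfw.ne', pow_succ]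
      ring
  · rw [if_neg h0, add_zero]
    by_cases hW : ∃ x ∈ W, x ∈ C
    · have hnot : ¬ ((∃ x ∈ W, x ∈ C ∩ {x | 0 < f x}) ∧ ∃ x ∈ W, x ∈ C ∩ {x | f x < 0}) := by
        rintro ⟨⟨x, hxW, hxC, hx⟩, ⟨y, hyW, hyC, hy⟩⟩
        have hx : 0 < f x := hx
        have hy : f y < 0 := hy
        have hd : 0 < f x - f y := by linarith
        -- the zero of `f` on the segment from `x` to `y`
        refine h0 ⟨(-f y / (f x - f y)) • x + (f x / (f x - f y)) • y,
          ⟨W.add_mem (W.smul_mem _ hxW) (W.smul_mem _ hyW), ?_⟩, ?_⟩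
        · change f _ = 0
          simp only [map_add, map_smul, smul_eq_mul]
          field_simp
          ring
        · refine hconv hxC hyC (div_nonneg (by linarith) hd.le) (div_nonneg hx.le hd.le) ?_
          field_simp
          ring
      obtain ⟨x, hxW, hxC⟩ := hW
      rcases lt_trichotomy (f x) 0 with h | h | h
      · have h2 : ∃ x ∈ W, x ∈ C ∩ {x | f x < 0} := ⟨x, hxW, hxC, h⟩
        rw [if_pos ⟨x, hxW, hxC⟩, if_pos h2, if_neg fun h1 => hnot ⟨h1, h2⟩, zero_add]
      · exact absurd ⟨x, ⟨hxW, h⟩, hxC⟩ h0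
      · have h1 : ∃ x ∈ W, x ∈ C ∩ {x | 0 < f x} := ⟨x, hxW, hxC, h⟩
        rw [if_pos ⟨x, hxW, hxC⟩, if_pos h1, if_neg fun h2 => hnot ⟨h1, h2⟩, add_zero]
    · rw [if_neg hW, if_neg, if_neg, add_zero]
      · rintro ⟨x, hx, h, -⟩
        exact hW ⟨x, hx, h⟩
      · rintro ⟨x, hx, h, -⟩
        exact hW ⟨x, hx, h⟩

lemma isOpen_inter_pos (f : V →ₗ[ℝ] ℝ) {C : Set V} (hC : IsOpen C) :
    IsOpen (C ∩ {x | 0 < f x}) :=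
  hC.inter (isOpen_lt continuous_const f.continuous_of_finiteDimensional)

lemma isOpen_inter_neg (f : V →ₗ[ℝ] ℝ) {C : Set V} (hC : IsOpen C) :
    IsOpen (C ∩ {x | f x < 0}) :=
  hC.inter (isOpen_lt f.continuous_of_finiteDimensional continuous_const)

/-- `cellSum` is additive under cutting by a further hyperplane. -/
lemma cellSum_cut (ℓ : ι → V →ₗ[ℝ] ℝ) (f : V →ₗ[ℝ] ℝ) (J : Finset ι) :
    ∀ (W : Submodule ℝ V) (C : Set V), IsOpen C → Convex ℝ C →
    cellSum ℓ J W C = cellSum ℓ J W (C ∩ {x | 0 < f x}) + cellSum ℓ J W (C ∩ {x | f x < 0})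
      + cellSum ℓ J (W ⊓ LinearMap.ker f) C := by
  induction J using Finset.induction_on with
  | empty => exact fun W C hC hconv => cut_empty ℓ f W hC hconv
  | insert j J hj ih =>
    intro W C hC hconv
    simp only [cellSum_insert ℓ hj]
    rw [ih W (C ∩ {x | 0 < ℓ j x}) (isOpen_inter_pos _ hC) (convex_inter_pos _ hconv),
      ih (W ⊓ LinearMap.ker (ℓ j)) C hC hconv,
      Set.inter_right_comm C {x | 0 < f x}, Set.inter_right_comm C {x | f x < 0},
      inf_right_comm W (LinearMap.ker f)]
    ring

/-- If `W ∩ C` contains a point at which all the forms are negative, then every region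
`{x ∈ W ∩ C : ℓ i x < 0 for i ∈ A}` is a nonempty cell, and inclusion-exclusion over `A ⊆ J`
gives the signed count of `{ℓ i ≥ 0, i ∈ J}`. -/
lemma cellSum_of_neg (ℓ : ι → V →ₗ[ℝ] ℝ) (J : Finset ι) (W : Submodule ℝ V) {u : V} (hu : u ∈ W) :
    ∀ C : Set V, IsOpen C → Convex ℝ C → u ∈ C → (∀ i ∈ J, ℓ i u < 0) →
    cellSum ℓ J W C = if J = ∅ then (-1) ^ Module.finrank ℝ W else 0 := by
  induction J using Finset.induction_on with
  | empty =>
    intro C _ _ huC _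
    rw [cellSum_empty, if_pos ⟨u, hu, huC⟩, if_pos rfl]
  | insert j J hj ih =>
    intro C hC hconv huC hneg
    have hcut := cellSum_cut ℓ (ℓ j) J W C hC hconv
    have h1 := ih C hC hconv huC fun i hi => hneg i (Finset.mem_insert_of_mem hi)
    have h2 := ih (C ∩ {x | ℓ j x < 0}) (isOpen_inter_neg _ hC) (convex_inter_neg _ hconv)
      ⟨huC, hneg j (Finset.mem_insert_self _ _)⟩ fun i hi => hneg i (Finset.mem_insert_of_mem hi)
    rw [cellSum_insert ℓ hj, if_neg (Finset.insert_ne_empty _ _)]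
    linarith

/-- The Euler relation for the slice `s > 0` of a pointed cone whose intersection with `s = 0` is
the origin. -/
lemma cellSum_slice (ℓ : ι → V →ₗ[ℝ] ℝ) (s : V →ₗ[ℝ] ℝ) (J : Finset ι) (W : Submodule ℝ V) {v : V}
    (hv : v ∈ W) (hsv : 0 < s v) (hpos : ∀ i ∈ J, 0 < ℓ i v)
    (hbdd : ∀ x ∈ W, s x = 0 → (∀ i ∈ J, 0 ≤ ℓ i x) → x = 0) :
    cellSum ℓ J W {x | 0 < s x} = -1 := by
  have hcut := cellSum_cut ℓ s J W Set.univ isOpen_univ convex_univ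
  have hneg : ∀ i ∈ J, ℓ i (-v) < 0 := fun i hi => by simpa using hpos i hi
  have h1 := cellSum_of_neg ℓ J W (W.neg_mem hv) Set.univ isOpen_univ convex_univ trivial hneg
  have h2 := cellSum_of_neg ℓ J W (W.neg_mem hv) (Set.univ ∩ {x | s x < 0})
    (isOpen_inter_neg _ isOpen_univ) (convex_inter_neg _ convex_univ)
    ⟨trivial, by simpa using hsv⟩ hneg
  -- only the origin survives at `s = 0`
  have h3 : cellSum ℓ J (W ⊓ LinearMap.ker s) Set.univ = 1 := by
    unfold cellSum
    rw [Finset.sum_eq_single J]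
    · rw [if_pos ⟨0, Submodule.zero_mem _, trivial, by simp, by simp +contextual⟩]
      have : (W ⊓ LinearMap.ker s) ⊓ ⨅ i ∈ J, LinearMap.ker (ℓ i) = ⊥ := by
        rw [eq_bot_iff]
        rintro x ⟨⟨hxW, hxs⟩, hx⟩
        have hx : ∀ i ∈ J, ℓ i x = 0 := by simpa [Submodule.mem_iInf] using hx
        exact hbdd x hxW hxs fun i hi => (hx i hi).ge
      rw [this, finrank_bot, pow_zero]
    · intro T hT hTJ
      rw [if_neg]
      rintro ⟨x, ⟨hxW, hxs⟩, -, h0, h1⟩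
      have hx0 : x = 0 := hbdd x hxW hxs fun i hi => by
        by_cases hiT : i ∈ T
        · exact (h0 i hiT).ge
        · exact (h1 i hi hiT).le
      obtain ⟨i, hi, hiT⟩ : ∃ i ∈ J, i ∉ T := by
        by_contra! h
        exact hTJ (Finset.Subset.antisymm (Finset.mem_powerset.1 hT) h)
      have := h1 i hi hiT
      simp [hx0] at this
    · intro h
      exact absurd (Finset.mem_powerset_self J) h
  rw [Set.univ_inter] at hcut
  linarith

end CellSum

/-! ### Faces and active sets -/

section Faces

variable {n m : ℕ} {a : Fin m → Fin n → ℝ} {b : Fin m → ℝ}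

/-- The indices of the constraints that hold with equality at `x`. -/
def activeAt (a : Fin m → Fin n → ℝ) (b : Fin m → ℝ) (x : Fin n → ℝ) : Finset (Fin m) :=
  Finset.univ.filter fun i => (∑ j, a i j * x j) + b i = 0

/-- The sets of constraints that are active at some point of the polytope. They index its nonempty
faces: `T` corresponds to the face whose relative interior is `{x ∈ P : activeAt a b x = T}`. -/
def activeSets (a : Fin m → Fin n → ℝ) (b : Fin m → ℝ) : Finset (Finset (Fin m)) :=
  Finset.univ.filter fun T => ∃ x ∈ polytope n m a b, activeAt a b x = T

/-- The set `σ̃(F)` of indices of the facets containing `F`. -/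
def facetsOver (a : Fin m → Fin n → ℝ) (b : Fin m → ℝ) (F : Set (Fin n → ℝ)) : Finset (Fin m) :=
  Finset.univ.filter fun i => F ⊆ facet n m a b i

lemma mem_activeAt {x : Fin n → ℝ} {i : Fin m} :
    i ∈ activeAt a b x ↔ (∑ j, a i j * x j) + b i = 0 := by
  simp [activeAt]

lemma mem_activeSets {T : Finset (Fin m)} :
    T ∈ activeSets a b ↔ ∃ x ∈ polytope n m a b, activeAt a b x = T := by
  simp [activeSets]

lemma mem_facetsOver {F : Set (Fin n → ℝ)} {i : Fin m} :
    i ∈ facetsOver a b F ↔ F ⊆ facet n m a b i := by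
  simp [facetsOver]

lemma mem_faceOf {S : Finset (Fin m)} {x : Fin n → ℝ} :
    x ∈ faceOf n m a b S ↔ x ∈ polytope n m a b ∧ S ⊆ activeAt a b x := by
  simp only [faceOf, Set.mem_inter_iff, Set.mem_iInter]
  refine and_congr_right fun hx => ⟨fun h i hi => mem_activeAt.2 (h i hi).2,
    fun h i hi => ⟨hx, mem_activeAt.1 (h hi)⟩⟩

lemma facetsOver_subset_activeAt {F : Set (Fin n → ℝ)} {x : Fin n → ℝ} (hx : x ∈ F) :
    facetsOver a b F ⊆ activeAt a b x :=
  fun _ hi => mem_activeAt.2 (mem_facetsOver.1 hi hx).2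

lemma subset_facetsOver_faceOf (S : Finset (Fin m)) :
    S ⊆ facetsOver a b (faceOf n m a b S) := fun _ hi =>
  mem_facetsOver.2 fun _ hx => ⟨(mem_faceOf.1 hx).1, mem_activeAt.1 ((mem_faceOf.1 hx).2 hi)⟩

lemma faceOf_facetsOver (S : Finset (Fin m)) :
    faceOf n m a b (facetsOver a b (faceOf n m a b S)) = faceOf n m a b S := by
  ext x
  constructor
  · intro h
    exact mem_faceOf.2 ⟨(mem_faceOf.1 h).1,
      (subset_facetsOver_faceOf S).trans (mem_faceOf.1 h).2⟩
  · intro h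
    exact mem_faceOf.2 ⟨(mem_faceOf.1 h).1, facetsOver_subset_activeAt h⟩

/-- A nonempty face has a relative interior point: one lying on no facet other than those
containing the face. -/
lemma exists_activeAt_eq {S : Finset (Fin m)} (hS : (faceOf n m a b S).Nonempty) :
    ∃ x ∈ faceOf n m a b S, activeAt a b x = facetsOver a b (faceOf n m a b S) := by
  obtain ⟨x, hx, hmin⟩ :=
    WellFounded.has_min (measure fun x => (activeAt a b x).card).wf (faceOf n m a b S) hS
  refine ⟨x, hx, ?_⟩
  by_contra hne
  have hss : facetsOver a b (faceOf n m a b S) ⊂ activeAt a b x :=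
    lt_of_le_of_ne (facetsOver_subset_activeAt hx) (Ne.symm hne)
  obtain ⟨i, hix, hi⟩ := Finset.exists_of_ssubset hss
  obtain ⟨y, hy, hiy⟩ := Set.not_subset.1 fun h => hi (mem_facetsOver.2 h)
  have hxP := (mem_faceOf.1 hx).1
  have hyP := (mem_faceOf.1 hy).1
  have hval : ∀ k, (∑ j, a k j * ((1 / 2 : ℝ) • (x + y)) j) + b k =
      (1 / 2) * (((∑ j, a k j * x j) + b k) + ((∑ j, a k j * y j) + b k)) := by
    intro k
    simp only [Pi.smul_apply, Pi.add_apply, smul_eq_mul]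
    have : ∑ j, a k j * (1 / 2 * (x j + y j)) =
        1 / 2 * ((∑ j, a k j * x j) + ∑ j, a k j * y j) := by
      rw [← Finset.sum_add_distrib, Finset.mul_sum]
      exact Finset.sum_congr rfl fun j _ => by ring
    rw [this]
    ring
  -- the midpoint of `x` and `y` has fewer active constraints than `x`
  refine hmin ((1 / 2 : ℝ) • (x + y)) (mem_faceOf.2 ⟨fun k => ?_, fun k hk => ?_⟩)
    (Finset.card_lt_card (Finset.ssubset_iff_of_subset ?_ |>.2 ⟨i, hix, ?_⟩))
  · rw [hval]
    have := hxP k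
    have := hyP k
    linarith
  · rw [mem_activeAt, hval, mem_activeAt.1 ((mem_faceOf.1 hx).2 hk),
      mem_activeAt.1 ((mem_faceOf.1 hy).2 hk)]
    ring
  · intro k hk
    rw [mem_activeAt, hval] at hk
    have := hxP k
    have := hyP k
    exact mem_activeAt.2 (by linarith)
  · intro hk
    rw [mem_activeAt, hval] at hk
    have h1 := hxP i
    have h2 := hyP i
    exact hiy ⟨hyP, by linarith⟩

lemma facetsOver_mem_activeSets {S : Finset (Fin m)} (hS : (faceOf n m a b S).Nonempty) :
    facetsOver a b (faceOf n m a b S) ∈ activeSets a b := by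
  obtain ⟨x, hx, h⟩ := exists_activeAt_eq hS
  exact mem_activeSets.2 ⟨x, (mem_faceOf.1 hx).1, h⟩

lemma facetsOver_faceOf {T : Finset (Fin m)} (hT : T ∈ activeSets a b) :
    facetsOver a b (faceOf n m a b T) = T := by
  obtain ⟨x, hx, rfl⟩ := mem_activeSets.1 hT
  exact (facetsOver_subset_activeAt (mem_faceOf.2 ⟨hx, subset_rfl⟩)).antisymm
    (subset_facetsOver_faceOf _)

lemma faceOf_nonempty {T : Finset (Fin m)} (hT : T ∈ activeSets a b) :
    (faceOf n m a b T).Nonempty := by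
  obtain ⟨x, hx, rfl⟩ := mem_activeSets.1 hT
  exact ⟨x, mem_faceOf.2 ⟨hx, subset_rfl⟩⟩

/-- Sums over nonempty faces are sums over active sets. -/
lemma sum_facesFinset {M : Type*} [AddCommMonoid M] (g : Set (Fin n → ℝ) → M) :
    ∑ F ∈ facesFinset n m a b, g F = ∑ T ∈ activeSets a b, g (faceOf n m a b T) := by
  have : facesFinset n m a b = (activeSets a b).image (faceOf n m a b) := by
    ext F
    simp only [facesFinset, Finset.mem_image, Finset.mem_filter, Finset.mem_univ, true_and]
    constructor
    · rintro ⟨S, hS, rfl⟩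
      exact ⟨_, facetsOver_mem_activeSets hS, faceOf_facetsOver S⟩
    · rintro ⟨T, hT, rfl⟩
      exact ⟨T, faceOf_nonempty hT, rfl⟩
  rw [this, Finset.sum_image]
  intro T hT T' hT' h
  rw [← facetsOver_faceOf hT, ← facetsOver_faceOf hT', h]

lemma mOf_faceOf {T : Finset (Fin m)} (hT : T ∈ activeSets a b) :
    mOf n m a b (faceOf n m a b T) = T.card :=
  congrArg Finset.card (facetsOver_faceOf hT)

/-! ### Homogenization and the Euler relation -/

/-- The homogenization `(x, s) ↦ ⟨a i, x⟩ + b i * s` of the `i`-th constraint. -/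
def homForm (a : Fin m → Fin n → ℝ) (b : Fin m → ℝ) (i : Fin m) :
    ((Fin n → ℝ) × ℝ) →ₗ[ℝ] ℝ where
  toFun y := (∑ j, a i j * y.1 j) + b i * y.2
  map_add' y z := by
    simp only [Prod.fst_add, Prod.snd_add, Pi.add_apply, mul_add, Finset.sum_add_distrib]
    ring
  map_smul' c y := by
    simp only [Prod.smul_fst, Prod.smul_snd, Pi.smul_apply, smul_eq_mul, RingHom.id_apply, mul_add,
      Finset.mul_sum]
    congr 1
    · exact Finset.sum_congr rfl fun j _ => by ring
    · ring

lemma homForm_apply (i : Fin m) (y : (Fin n → ℝ) × ℝ) :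
    homForm a b i y = (∑ j, a i j * y.1 j) + b i * y.2 := rfl

lemma homForm_one (i : Fin m) (x : Fin n → ℝ) :
    homForm a b i (x, 1) = (∑ j, a i j * x j) + b i := by
  simp [homForm_apply]

lemma homForm_add_smul (i : Fin m) (x y : Fin n → ℝ) (t : ℝ) :
    (∑ j, a i j * (x + t • y) j) + b i =
      ((∑ j, a i j * x j) + b i) + t * homForm a b i (y, 0) := by
  rw [← homForm_one, ← homForm_one, ← smul_eq_mul t, ← map_smul, ← map_add]
  simp

/-- The face with active set `T` spans the affine space `⟨a i, x⟩ + b i = 0`, `i ∈ T`, which is the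
slice `s = 1` of the subspace cut out by the homogenized forms. -/
lemma sdim_add_one {T : Finset (Fin m)} (hT : T ∈ activeSets a b) :
    sdim (faceOf n m a b T) + 1 =
      Module.finrank ℝ (⨅ i ∈ T, LinearMap.ker (homForm a b i) :
        Submodule ℝ ((Fin n → ℝ) × ℝ)) := by
  obtain ⟨x, hxP, hxT⟩ := mem_activeSets.1 hT
  set K : Submodule ℝ ((Fin n → ℝ) × ℝ) := ⨅ i ∈ T, LinearMap.ker (homForm a b i) with hK
  have memK : ∀ y, y ∈ K ↔ ∀ i ∈ T, homForm a b i y = 0 := by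
    intro y
    simp [hK, Submodule.mem_iInf]
  have hxK : (x, (1 : ℝ)) ∈ K := (memK _).2 fun i hi => by
    rw [homForm_one]
    exact mem_activeAt.1 (hxT ▸ hi)
  have hdir : vectorSpan ℝ (faceOf n m a b T) = K.comap (LinearMap.inl ℝ (Fin n → ℝ) ℝ) := by
    apply le_antisymm
    · rw [vectorSpan_def, Submodule.span_le]
      rintro _ ⟨y, hy, z, hz, rfl⟩
      refine (memK _).2 fun i hi => ?_
      have e : (LinearMap.inl ℝ (Fin n → ℝ) ℝ (y -ᵥ z)) = (y, (1 : ℝ)) - (z, 1) := by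
        ext <;> simp
      rw [e, map_sub, homForm_one, homForm_one, mem_activeAt.1 ((mem_faceOf.1 hy).2 hi),
        mem_activeAt.1 ((mem_faceOf.1 hz).2 hi), sub_zero]
    · intro y hy
      have hy : ∀ i ∈ T, homForm a b i (y, 0) = 0 := (memK _).1 hy
      -- constraints inactive at `x` remain satisfied at `x + t • y` for small `t`
      have hev : ∀ᶠ t in nhds (0 : ℝ), ∀ i, i ∉ T →
          0 < ((∑ j, a i j * x j) + b i) + t * homForm a b i (y, 0) := by
        rw [Filter.eventually_all]
        intro i
        by_cases hi : i ∈ T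
        · exact Filter.Eventually.of_forall fun t h => absurd hi h
        · have hpos : 0 < (∑ j, a i j * x j) + b i :=
            lt_of_le_of_ne (hxP i) fun h => hi (hxT ▸ mem_activeAt.2 h.symm)
          have hc : Continuous fun t : ℝ =>
              ((∑ j, a i j * x j) + b i) + t * homForm a b i (y, 0) := by fun_prop
          have := hc.continuousAt.eventually_mem (x := (0 : ℝ))
            (isOpen_Ioi.mem_nhds (show _ ∈ Set.Ioi (0 : ℝ) by simpa using hpos))
          exact this.mono fun t ht _ => ht
      obtain ⟨ε, hε, hball⟩ := Metric.eventually_nhds_iff.1 hev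
      have ht := hball (y := ε / 2) (by
        rw [Real.dist_eq, sub_zero, abs_of_pos (by linarith)]
        linarith)
      have hmem : x + (ε / 2) • y ∈ faceOf n m a b T := by
        have hz : ∀ i ∈ T, (∑ j, a i j * (x + (ε / 2) • y) j) + b i = 0 := fun i hi => by
          rw [homForm_add_smul, hy i hi, mem_activeAt.1 (hxT ▸ hi : i ∈ activeAt a b x)]
          ring
        refine mem_faceOf.2 ⟨fun i => ?_, fun i hi => mem_activeAt.2 (hz i hi)⟩
        by_cases hi : i ∈ T
        · exact (hz i hi).ge
        · rw [homForm_add_smul]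
          exact (ht i hi).le
      have hd := vsub_mem_vectorSpan ℝ hmem
        (mem_faceOf.2 ⟨hxP, hxT.ge⟩ : x ∈ faceOf n m a b T)
      have := (vectorSpan ℝ (faceOf n m a b T)).smul_mem (ε / 2)⁻¹ hd
      rwa [vsub_eq_sub, add_sub_cancel_left, smul_smul, inv_mul_cancel₀ (by positivity),
        one_smul] at this
  rw [sdim, direction_affineSpan, hdir,
    ← finrank_inf_ker_add_one K (LinearMap.snd ℝ (Fin n → ℝ) ℝ) hxK (by simp)]
  congr 1
  have hmap : K ⊓ LinearMap.ker (LinearMap.snd ℝ (Fin n → ℝ) ℝ) =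
      (K.comap (LinearMap.inl ℝ (Fin n → ℝ) ℝ)).map (LinearMap.inl ℝ (Fin n → ℝ) ℝ) := by
    rw [Submodule.map_comap_eq, LinearMap.range_inl, inf_comm]
  rw [hmap]
  exact (Submodule.equivMapOfInjective _ LinearMap.inl_injective _).finrank_eq

/-- The Euler relation for the face `⋂ i ∈ S, F i`. -/
lemma euler_faceOf (hcomp : IsCompact (polytope n m a b)) {S : Finset (Fin m)}
    (hS : (faceOf n m a b S).Nonempty) :
    ∑ T ∈ (activeSets a b).filter (fun T => S ⊆ T), (-1 : ℤ) ^ sdim (faceOf n m a b T) = 1 := by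
  obtain ⟨p, hp, hpσ⟩ := exists_activeAt_eq hS
  set σ := facetsOver a b (faceOf n m a b S) with hσ
  set W : Submodule ℝ ((Fin n → ℝ) × ℝ) := ⨅ i ∈ σ, LinearMap.ker (homForm a b i) with hW
  have memW : ∀ y, y ∈ W ↔ ∀ i ∈ σ, homForm a b i y = 0 := by
    intro y
    simp [hW, Submodule.mem_iInf]
  have hpP := (mem_faceOf.1 hp).1
  have hslice := cellSum_slice (homForm a b) (LinearMap.snd ℝ (Fin n → ℝ) ℝ) σᶜ W (v := (p, 1))
    ((memW _).2 fun i hi => by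
      rw [homForm_one]
      exact mem_activeAt.1 (hpσ ▸ hi))
    (by simp)
    (fun i hi => by
      rw [homForm_one]
      exact lt_of_le_of_ne (hpP i) fun h =>
        Finset.mem_compl.1 hi (hpσ ▸ mem_activeAt.2 h.symm))
    (by
      -- at `s = 0` a nonzero solution would be a recession direction of the bounded polytope
      rintro ⟨y, s⟩ hyW hs hyJ
      obtain rfl : s = 0 := hs
      have hy0 : ∀ i, 0 ≤ homForm a b i (y, 0) := fun i => by
        by_cases hi : i ∈ σ
        · exact ((memW _).1 hyW i hi).ge
        · exact hyJ i (Finset.mem_compl.2 hi)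
      obtain ⟨R, hR⟩ := hcomp.isBounded.exists_norm_le
      by_contra hne
      have hyn : 0 < ‖y‖ := norm_pos_iff.2 fun h => hne (by rw [h]; rfl)
      have hR0 : 0 ≤ R := (norm_nonneg p).trans (hR p hpP)
      have hmem : p + ((2 * R + 1) / ‖y‖) • y ∈ polytope n m a b := fun i => by
        rw [homForm_add_smul]
        exact add_nonneg (hpP i) (mul_nonneg (by positivity) (hy0 i))
      have h1 := hR _ hmem
      have h2 : ‖((2 * R + 1) / ‖y‖) • y‖ = 2 * R + 1 := by
        rw [norm_smul, Real.norm_of_nonneg (by positivity), div_mul_cancel₀ _ hyn.ne']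
      have h3 := norm_sub_le (p + ((2 * R + 1) / ‖y‖) • y) p
      rw [add_sub_cancel_left, h2] at h3
      have := hR p hpP
      linarith)
  have hcond : ∀ T ⊆ σᶜ,
      ((∃ x ∈ W, x ∈ {x | 0 < LinearMap.snd ℝ (Fin n → ℝ) ℝ x} ∧
        (∀ i ∈ T, homForm a b i x = 0) ∧ ∀ i ∈ σᶜ, i ∉ T → 0 < homForm a b i x) ↔
      σ ∪ T ∈ activeSets a b) := by
    intro T hT
    rw [mem_activeSets]
    constructor
    · rintro ⟨⟨x, s⟩, hxW, hs, h0, h1⟩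
      have hs : 0 < s := hs
      -- dehomogenize
      have hval : ∀ i, (∑ j, a i j * (s⁻¹ • x) j) + b i = s⁻¹ * homForm a b i (x, s) := fun i => by
        rw [← homForm_one, ← smul_eq_mul s⁻¹, ← map_smul, Prod.smul_mk, smul_eq_mul,
          inv_mul_cancel₀ hs.ne']
      have hin : ∀ i ∈ σ ∪ T, homForm a b i (x, s) = 0 := fun i hi =>
        (Finset.mem_union.1 hi).elim (fun h => (memW _).1 hxW i h) (h0 i)
      have hout : ∀ i, i ∉ σ ∪ T → 0 < homForm a b i (x, s) := fun i hi => by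
        rw [Finset.mem_union, not_or] at hi
        exact h1 i (Finset.mem_compl.2 hi.1) hi.2
      refine ⟨s⁻¹ • x, fun i => ?_, ?_⟩
      · rw [hval]
        by_cases hi : i ∈ σ ∪ T
        · rw [hin i hi, mul_zero]
        · exact mul_nonneg (inv_nonneg.2 hs.le) (hout i hi).le
      · ext i
        rw [mem_activeAt, hval]
        constructor
        · intro h
          by_contra hi
          exact (mul_pos (inv_pos.2 hs) (hout i hi)).ne' h
        · intro hi
          rw [hin i hi, mul_zero]
    · rintro ⟨x, hxP, hxT⟩
      refine ⟨(x, 1), (memW _).2 fun i hi => ?_, by simp, fun i hi => ?_, fun i hi hiT => ?_⟩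
      · rw [homForm_one]
        exact mem_activeAt.1 (hxT ▸ Finset.mem_union_left _ hi)
      · rw [homForm_one]
        exact mem_activeAt.1 (hxT ▸ Finset.mem_union_right _ hi)
      · rw [homForm_one]
        refine lt_of_le_of_ne (hxP i) fun h => ?_
        have : i ∈ σ ∪ T := hxT ▸ mem_activeAt.2 h.symm
        exact (Finset.mem_union.1 this).elim (Finset.mem_compl.1 hi) hiT
  have hsum : ∑ T ∈ (activeSets a b).filter (fun T => S ⊆ T),
      (-1 : ℤ) ^ (sdim (faceOf n m a b T) + 1) = -1 := by
    refine Eq.trans ?_ hslice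
    rw [cellSum, ← Finset.sum_filter]
    have hsub : ∀ T ∈ activeSets a b, S ⊆ T → σ ⊆ T := by
      intro T hT hST
      obtain ⟨x, hxP, rfl⟩ := mem_activeSets.1 hT
      exact facetsOver_subset_activeAt (mem_faceOf.2 ⟨hxP, hST⟩)
    refine Finset.sum_nbij' (fun T => T \ σ) (fun T => σ ∪ T) ?_ ?_ ?_ ?_ ?_
    · intro T hT
      obtain ⟨hT, hST⟩ := Finset.mem_filter.1 hT
      have hTσ : T \ σ ⊆ σᶜ := fun i hi => Finset.mem_compl.2 (Finset.mem_sdiff.1 hi).2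
      rw [Finset.mem_filter, Finset.mem_powerset]
      refine ⟨hTσ, (hcond _ hTσ).2 ?_⟩
      rwa [Finset.union_sdiff_of_subset (hsub T hT hST)]
    · intro T hT
      rw [Finset.mem_filter, Finset.mem_powerset] at hT
      exact Finset.mem_filter.2 ⟨(hcond T hT.1).1 hT.2,
        (subset_facetsOver_faceOf S).trans Finset.subset_union_left⟩
    · intro T hT
      obtain ⟨hT, hST⟩ := Finset.mem_filter.1 hT
      exact Finset.union_sdiff_of_subset (hsub T hT hST)
    · intro T hT
      rw [Finset.mem_filter, Finset.mem_powerset] at hT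
      exact Finset.union_sdiff_cancel_left
        (Finset.disjoint_left.2 fun i hi hiT => Finset.mem_compl.1 (hT.1 hiT) hi)
    · intro T hT
      obtain ⟨hT, hST⟩ := Finset.mem_filter.1 hT
      rw [sdim_add_one hT, hW, ← Finset.iInf_union,
        Finset.union_sdiff_of_subset (hsub T hT hST)]
  simp only [pow_succ, ← Finset.sum_mul] at hsum
  linarith

/-! ### Coefficients -/

lemma coeff_left (k : ℕ) :
    (∑ F ∈ facesFinset n m a b, (Polynomial.X : Polynomial ℤ) ^ mOf n m a b F).coeff k =
      ((activeSets a b).filter fun T => T.card = k).card := by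
  rw [sum_facesFinset, Polynomial.finsetSum_coeff, Finset.card_filter, Nat.cast_sum]
  refine Finset.sum_congr rfl fun T hT => ?_
  rw [mOf_faceOf hT, Polynomial.coeff_X_pow]
  simp [eq_comm]

/-- Writing `(T.card).choose k` as the number of `k`-subsets `S ⊆ T` and exchanging the sums, the
coefficient becomes a sum over `S` of Euler characteristics of the faces `⋂ i ∈ S, F i`. -/
lemma coeff_right (hcomp : IsCompact (polytope n m a b)) (k : ℕ) :
    (∑ F ∈ facesFinset n m a b,
      (-1 : Polynomial ℤ) ^ sdim F * (Polynomial.X + 1) ^ mOf n m a b F).coeff k =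
      (((Finset.powersetCard k (Finset.univ : Finset (Fin m))).filter fun S =>
        (faceOf n m a b S).Nonempty).card : ℤ) := by
  have hterm : ∀ T ∈ activeSets a b,
      ((-1 : Polynomial ℤ) ^ sdim (faceOf n m a b T) *
        (Polynomial.X + 1) ^ mOf n m a b (faceOf n m a b T)).coeff k =
      ∑ S ∈ Finset.powersetCard k (Finset.univ : Finset (Fin m)),
        if S ⊆ T then (-1 : ℤ) ^ sdim (faceOf n m a b T) else 0 := by
    intro T hT
    have e : (-1 : Polynomial ℤ) ^ sdim (faceOf n m a b T) =
        Polynomial.C ((-1) ^ sdim (faceOf n m a b T)) := by simp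
    have e2 : (Finset.powersetCard k (Finset.univ : Finset (Fin m))).filter (fun S => S ⊆ T) =
        Finset.powersetCard k T := by
      ext S
      simp [Finset.mem_powersetCard, and_comm]
    rw [mOf_faceOf hT, e, Polynomial.coeff_C_mul, Polynomial.coeff_X_add_one_pow,
      ← Finset.sum_filter, e2, Finset.sum_const, Finset.card_powersetCard, nsmul_eq_mul, mul_comm]
  rw [sum_facesFinset, Polynomial.finsetSum_coeff, Finset.sum_congr rfl hterm, Finset.sum_comm,
    Finset.card_filter, Nat.cast_sum]
  refine Finset.sum_congr rfl fun S _ => ?_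
  rw [← Finset.sum_filter]
  by_cases hS : (faceOf n m a b S).Nonempty
  · rw [euler_faceOf hcomp hS, if_pos hS, Nat.cast_one]
  · rw [if_neg hS, Nat.cast_zero, Finset.filter_false_of_mem, Finset.sum_empty]
    intro T hT hST
    obtain ⟨x, hx⟩ := faceOf_nonempty hT
    exact hS ⟨x, mem_faceOf.2 ⟨(mem_faceOf.1 hx).1, hST.trans (mem_faceOf.1 hx).2⟩⟩

lemma filter_activeSets_subset (k : ℕ) :
    ((activeSets a b).filter fun T => T.card = k) ⊆
      (Finset.powersetCard k (Finset.univ : Finset (Fin m))).filter fun S =>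
        (faceOf n m a b S).Nonempty := by
  intro T hT
  obtain ⟨hT, hk⟩ := Finset.mem_filter.1 hT
  exact Finset.mem_filter.2 ⟨Finset.mem_powersetCard.2 ⟨Finset.subset_univ _, hk⟩,
    faceOf_nonempty hT⟩

lemma facetsOver_polytope (hn : 1 ≤ n) (hint : (interior (polytope n m a b)).Nonempty)
    (hfacet : ∀ i, sdim (facet n m a b i) = n - 1) :
    facetsOver a b (faceOf n m a b ∅) = ∅ := by
  rw [Finset.eq_empty_iff_forall_notMem]
  intro i hi
  have hP : faceOf n m a b ∅ = polytope n m a b := by simp [faceOf]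
  have heq : facet n m a b i = polytope n m a b :=
    Set.Subset.antisymm (fun x hx => hx.1) (hP ▸ mem_facetsOver.1 hi)
  have htop : affineSpan ℝ (polytope n m a b) = ⊤ := by
    rw [eq_top_iff, ← isOpen_interior.affineSpan_eq_top hint]
    exact affineSpan_mono ℝ interior_subset
  have h := hfacet i
  rw [heq, sdim, htop, AffineSubspace.direction_top, finrank_top, Module.finrank_fin_fun] at h
  omega

/-- Two facets have the same dimension, so if a nonempty one is contained in another they span the
same affine subspace and hence coincide. The facet must be assumed nonempty because for `n = 1` the
empty set has the dimension `0` required of a facet. -/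
lemma facetsOver_facet (hfacet : ∀ i, sdim (facet n m a b i) = n - 1)
    (hdist : ∀ i j : Fin m, i ≠ j → facet n m a b i ≠ facet n m a b j) {i : Fin m}
    (hne : (faceOf n m a b {i}).Nonempty) :
    facetsOver a b (faceOf n m a b {i}) = {i} := by
  have hF : faceOf n m a b {i} = facet n m a b i := by
    ext x
    simp only [mem_faceOf, Finset.singleton_subset_iff, mem_activeAt]
    rfl
  refine Finset.Subset.antisymm (fun j hj => ?_) (subset_facetsOver_faceOf _)
  rw [Finset.mem_singleton]
  by_contra hji
  have hsub : facet n m a b i ⊆ facet n m a b j := hF ▸ mem_facetsOver.1 hj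
  have hspan : affineSpan ℝ (facet n m a b i) = affineSpan ℝ (facet n m a b j) := by
    have hle := affineSpan_mono ℝ hsub
    refine AffineSubspace.eq_of_direction_eq_of_nonempty_of_le ?_ ?_ hle
    · exact Submodule.eq_of_le_of_finrank_eq (AffineSubspace.direction_le hle)
        ((hfacet i).trans (hfacet j).symm)
    · rw [hF] at hne
      exact (affineSpan_nonempty ℝ).2 hne
  refine hdist i j (Ne.symm hji) (hsub.antisymm fun x hx => ⟨hx.1, ?_⟩)
  have hx' : x ∈ affineSpan ℝ (facet n m a b i) := hspan ▸ subset_affineSpan ℝ _ hx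
  obtain ⟨p, hp⟩ := hF ▸ hne
  -- the affine span of the facet stays inside its hyperplane
  have hd : x - p ∈ vectorSpan ℝ (facet n m a b i) := by
    rw [← direction_affineSpan]
    exact AffineSubspace.vsub_mem_direction hx' (subset_affineSpan ℝ _ hp)
  have hker : vectorSpan ℝ (facet n m a b i) ≤
      (LinearMap.ker (homForm a b i)).comap (LinearMap.inl ℝ (Fin n → ℝ) ℝ) := by
    rw [vectorSpan_def, Submodule.span_le]
    rintro _ ⟨y, hy, z, hz, rfl⟩
    have e : (LinearMap.inl ℝ (Fin n → ℝ) ℝ (y -ᵥ z)) = (y, (1 : ℝ)) - (z, 1) := by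
      ext <;> simp
    change homForm a b i _ = 0
    rw [e, map_sub, homForm_one, homForm_one, hy.2, hz.2, sub_zero]
  have h0 : homForm a b i (x - p, 0) = 0 := hker hd
  have := homForm_add_smul (a := a) (b := b) i p (x - p) 1
  rw [one_smul, add_sub_cancel, h0, hp.2] at this
  rw [this]
  ring

end Faces

/-- Coefficientwise inequality `F_P(1,t) ≤ F_P(-1, t+1)` for the two-dimensional face
polynomial of a convex polytope, with equality in the terms `t^0` and `t^1`. -/
theorem facePolynomial_coeff_le
    (n m : ℕ) (hn : 1 ≤ n) (hm : 1 ≤ m)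
    (a : Fin m → Fin n → ℝ) (b : Fin m → ℝ)
    (hcomp : IsCompact (polytope n m a b))
    (hint : (interior (polytope n m a b)).Nonempty)
    (hfacet : ∀ i, sdim (facet n m a b i) = n - 1)
    (hdist : ∀ i j : Fin m, i ≠ j → facet n m a b i ≠ facet n m a b j) :
    (∀ k : ℕ,
      (∑ F ∈ facesFinset n m a b,
          (Polynomial.X : Polynomial ℤ) ^ mOf n m a b F).coeff k ≤
      (∑ F ∈ facesFinset n m a b,
          (-1 : Polynomial ℤ) ^ sdim F * (Polynomial.X + 1) ^ mOf n m a b F).coeff k) ∧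
    (∀ k : ℕ, k = 0 ∨ k = 1 →
      (∑ F ∈ facesFinset n m a b,
          (Polynomial.X : Polynomial ℤ) ^ mOf n m a b F).coeff k =
      (∑ F ∈ facesFinset n m a b,
          (-1 : Polynomial ℤ) ^ sdim F * (Polynomial.X + 1) ^ mOf n m a b F).coeff k) := by
  refine ⟨fun k => ?_, fun k hk => ?_⟩
  · rw [coeff_left, coeff_right hcomp]
    exact_mod_cast Finset.card_le_card (filter_activeSets_subset k)
  · rw [coeff_left, coeff_right hcomp]
    congr 2
    refine (filter_activeSets_subset k).antisymm fun S hS => ?_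
    obtain ⟨hSk, hne⟩ := Finset.mem_filter.1 hS
    have hSk := (Finset.mem_powersetCard.1 hSk).2
    refine Finset.mem_filter.2 ⟨?_, hSk⟩
    have hmem := facetsOver_mem_activeSets hne
    rcases hk with rfl | rfl
    · obtain rfl := Finset.card_eq_zero.1 hSk
      rwa [facetsOver_polytope hn hint hfacet] at hmem
    · obtain ⟨i, rfl⟩ := Finset.card_eq_one.1 hSk
      rwa [facetsOver_facet hfacet hdist hne] at hmem
end
end

section
/- Let K be a finite abstract simplicial complex on {1,…,m} and σ ∈ K, and let σ̂ be the intersection of all face simplices of K containing σ. Then f_{link_K σ}(t) = (1+t)^{|σ̂| − |σ|} · f_{link_K σ̂}(t) in ℤ[t]. In particular, if σ is not a face simplex (σ ≠ σ̂), then f_{link_K σ}(−1) = 0, i.e., the reduced Euler characteristic of link_K σ vanishes (the paper concludes that link_K σ is contractible, being a cone). -/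
/-!
Every maximal simplex is a face simplex, so a maximal simplex containing `σ` contains `σ̂`.
Enlarging `τ ∪ σ ∈ K` to a maximal simplex therefore shows `τ ∪ σ̂ ∈ K`
(`union_hatSimplex_mem_iff`). Consequently `link_K σ` is the join of the full simplex on `σ̂ \ σ`
with `link_K σ̂`: each of its members splits uniquely as `a ∪ b` with `a ⊆ σ̂ \ σ` and
`b ∈ link_K σ̂`. The f-polynomial is multiplicative on joins, and that of the full simplex on
`n` vertices is `(1 + t) ^ n`, by the binomial theorem. The vanishing at `-1` follows since
`|σ̂| - |σ| > 0` when `σ ≠ σ̂`.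
-/

noncomputable section
open scoped Classical
open Polynomial

/-- `σ̂`: the intersection of all face simplices of `K` containing `σ`
(the minimal face simplex containing `σ`). -/
def hatSimplex {m : ℕ} (K : Finset (Finset (Fin m))) (σ : Finset (Fin m)) :
    Finset (Fin m) :=
  (Finset.univ.filter fun ρ => IsFaceSimplex K ρ ∧ σ ⊆ ρ).inf id

theorem subset_hatSimplex {m : ℕ} (K : Finset (Finset (Fin m))) (σ : Finset (Fin m)) :
    σ ⊆ hatSimplex K σ := by
  refine Finset.le_inf fun ρ hρ => ?_
  exact (Finset.mem_filter.mp hρ).2.2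

theorem hatSimplex_subset_of_isMaxSimplex {m : ℕ} {K : Finset (Finset (Fin m))}
    {σ ρ : Finset (Fin m)} (hρ : IsMaxSimplex K ρ) (hσ : σ ⊆ ρ) : hatSimplex K σ ⊆ ρ := by
  have hface : IsFaceSimplex K ρ := ⟨{ρ}, by simp, by simpa using hρ, by simp⟩
  exact Finset.inf_le (f := id) (Finset.mem_filter.mpr ⟨Finset.mem_univ _, hface, hσ⟩)

theorem exists_isMaxSimplex_superset {m : ℕ} {K : Finset (Finset (Fin m))}
    {τ : Finset (Fin m)} (hτ : τ ∈ K) : ∃ ρ, IsMaxSimplex K ρ ∧ τ ⊆ ρ := by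
  obtain ⟨ρ, hle, hmax⟩ := K.exists_le_maximal hτ
  exact ⟨ρ, ⟨hmax.1, fun π hπ h => Finset.Subset.antisymm h (hmax.2 hπ h)⟩, hle⟩

theorem union_hatSimplex_mem_iff {m : ℕ} {K : Finset (Finset (Fin m))}
    (hK : IsSimplicialComplex K) (σ τ : Finset (Fin m)) :
    τ ∪ hatSimplex K σ ∈ K ↔ τ ∪ σ ∈ K := by
  constructor
  · intro h
    exact hK.2 _ h _ (Finset.union_subset_union_right (subset_hatSimplex K σ))
  · intro h
    obtain ⟨ρ, hρ, hsub⟩ := exists_isMaxSimplex_superset h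
    have hhat := hatSimplex_subset_of_isMaxSimplex hρ (Finset.union_subset_right hsub)
    exact hK.2 _ hρ.1 _ (Finset.union_subset (Finset.union_subset_left hsub) hhat)

/-- The f-polynomial of the full simplex on the vertex set `s`. -/
theorem fPoly_powerset {m : ℕ} (s : Finset (Fin m)) :
    fPoly s.powerset = (1 + Polynomial.X) ^ s.card := by
  have h := Finset.sum_pow_mul_eq_add_pow (Polynomial.X : Polynomial ℤ) 1 s
  simpa [fPoly, add_comm] using h

/-- If adjoining `ρ ⊇ σ` to a set gives a simplex exactly when adjoining `σ` does, then
`link_K σ` is the join of the full simplex on `ρ \ σ` with `link_K ρ`, whence the product formula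
for f-polynomials. -/
theorem fPoly_linkK_of_union_mem_iff {m : ℕ} {K : Finset (Finset (Fin m))}
    {σ ρ : Finset (Fin m)} (hσρ : σ ⊆ ρ) (h : ∀ τ, τ ∪ ρ ∈ K ↔ τ ∪ σ ∈ K) :
    fPoly (linkK K σ) = fPoly (ρ \ σ).powerset * fPoly (linkK K ρ) := by
  unfold fPoly
  rw [Finset.sum_mul_sum, ← Finset.sum_product']
  refine Finset.sum_bij' (fun τ _ => (τ ∩ ρ, τ \ ρ)) (fun p _ => p.1 ∪ p.2) ?_ ?_ ?_ ?_ ?_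
  · intro τ hτ
    simp only [linkK, Finset.mem_filter, Finset.mem_univ, true_and] at hτ
    simp only [linkK, Finset.mem_product, Finset.mem_powerset, Finset.mem_filter,
      Finset.mem_univ, true_and]
    refine ⟨?_, by simp, ?_⟩
    · have hdisj := Finset.disjoint_left.mp (Finset.disjoint_iff_inter_eq_empty.mpr hτ.1)
      grind
    · rw [Finset.sdiff_union_self_eq_union]
      exact (h τ).mpr hτ.2
  · rintro ⟨a, b⟩ hp
    simp only [linkK, Finset.mem_product, Finset.mem_powerset, Finset.mem_filter,
      Finset.mem_univ, true_and] at hp ⊢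
    obtain ⟨ha, hb, hbK⟩ := hp
    refine ⟨by grind, (h _).mp ?_⟩
    have : a ∪ b ∪ ρ = b ∪ ρ := by grind
    rwa [this]
  · intro τ _
    exact (Finset.union_comm _ _).trans (Finset.sdiff_union_inter τ ρ)
  · rintro ⟨a, b⟩ hp
    simp only [linkK, Finset.mem_product, Finset.mem_powerset, Finset.mem_filter,
      Finset.mem_univ, true_and] at hp
    obtain ⟨ha, hb, -⟩ := hp
    have hdisj := Finset.disjoint_left.mp (Finset.disjoint_iff_inter_eq_empty.mpr hb)
    ext x <;> grind
  · intro τ _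
    rw [← pow_add, Finset.card_inter_add_card_sdiff]

/-- `f_{link_K σ}(t) = (1+t)^{|σ̂| - |σ|} · f_{link_K σ̂}(t)`; in particular, if `σ` is
not a face simplex (`σ ≠ σ̂`) then `f_{link_K σ}(-1) = 0`, i.e. the reduced Euler
characteristic of `link_K σ` vanishes. -/
theorem fPoly_link_eq_mul_hat (m : ℕ) (K : Finset (Finset (Fin m)))
    (hK : IsSimplicialComplex K) (σ : Finset (Fin m)) (hσ : σ ∈ K) :
    fPoly (linkK K σ) =
      (1 + Polynomial.X) ^ ((hatSimplex K σ).card - σ.card) * fPoly (linkK K (hatSimplex K σ))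
    ∧ (σ ≠ hatSimplex K σ → (fPoly (linkK K σ)).eval (-1) = 0) := by
  have hsub := subset_hatSimplex K σ
  have hprod : fPoly (linkK K σ) = (1 + Polynomial.X) ^ ((hatSimplex K σ).card - σ.card) *
      fPoly (linkK K (hatSimplex K σ)) := by
    rw [fPoly_linkK_of_union_mem_iff hsub (union_hatSimplex_mem_iff hK σ), fPoly_powerset,
      Finset.card_sdiff_of_subset hsub]
  refine ⟨hprod, fun hne => ?_⟩
  have hlt := Finset.card_lt_card (hsub.ssubset_of_ne hne)
  have hexp : (hatSimplex K σ).card - σ.card ≠ 0 := by omega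
  simp [hprod, hexp]
end
end
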